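/- Let E be a finite-dimensional real normed space, let n be a natural number, let χ and ξ be continuous linear functionals on E, and let ν be a finite Borel measure on E carried by the set {y ∈ E : χ(y) = 1 and ξ(y) > 0}. Define ν_ξ as the pushforward, under the map y ↦ ξ(y)^{-1} • y, of the measure with density y ↦ ξ(y)^{-(n+1)} with respect to ν. Let λ_n be the measure on (0,∞) with density t ↦ t^n with respect to Lebesgue measure. Then the pushforward of the product measure λ_n ⊗ ν under the map (t, y) ↦ t • y is equal to the pushforward of the product measure λ_n ⊗ ν_ξ under the same map (t, y) ↦ t • y. -/

import Mathlib

open MeasureTheory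

/-- Scaling of `t ^ n dt` on the positive half-line. -/
theorem lintegral_pow_withDensity_comp_inv_mul (n : ℕ) {c : ℝ} (hc : 0 < c)
    {g : ℝ → ENNReal} (hg : Measurable g) :
    ∫⁻ t, g (c⁻¹ * t) ∂((volume.restrict (Set.Ioi (0 : ℝ))).withDensity
        (fun t => ENNReal.ofReal (t ^ n))) =
      ENNReal.ofReal (c ^ (n + 1)) * ∫⁻ t, g t ∂((volume.restrict (Set.Ioi (0 : ℝ))).withDensity
        (fun t => ENNReal.ofReal (t ^ n))) := by
  have hpow : Measurable fun t : ℝ => ENNReal.ofReal (t ^ n) := by fun_prop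
  have himage : (fun t : ℝ => c * t) '' Set.Ioi 0 = Set.Ioi 0 := by
    rw [Set.image_mul_left_Ioi hc, mul_zero]
  rw [lintegral_withDensity_eq_lintegral_mul _ hpow hg,
    lintegral_withDensity_eq_lintegral_mul _ hpow (by fun_prop),
    ← lintegral_const_mul _ (hpow.mul hg)]
  nth_rewrite 1 [← himage]
  rw [lintegral_image_eq_lintegral_abs_deriv_mul measurableSet_Ioi
    (fun t _ => (hasDerivAt_const_mul c).hasDerivWithinAt)
    (mul_right_injective₀ hc.ne').injOn]
  refine setLIntegral_congr_fun measurableSet_Ioi fun t _ => ?_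
  simp only [Pi.mul_apply, abs_of_pos hc, inv_mul_cancel_left₀ hc.ne']
  rw [← mul_assoc, ← mul_assoc, ← ENNReal.ofReal_mul hc.le,
    ← ENNReal.ofReal_mul (by positivity : 0 ≤ c ^ (n + 1))]
  congr 2
  ring

/-- Invariance of the Duistermaat–Heckman measure under change of Reeb cross-section:
if `ν` is carried by `{χ = 1} ∩ {ξ > 0}` and `ν_ξ` is the pushforward under
`y ↦ ξ(y)⁻¹ • y` of `ξ(y)^{-(n+1)} ν`, then the cone measures built from `ν` and `ν_ξ`
by pushing forward `t^n dt ⊗ (·)` under `(t, y) ↦ t • y` coincide. -/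
theorem coneMeasure_eq_of_crossSection
    {E : Type*} [NormedAddCommGroup E] [NormedSpace ℝ E]
    [FiniteDimensional ℝ E] [MeasurableSpace E] [BorelSpace E]
    (n : ℕ) (χ ξ : E →L[ℝ] ℝ)
    (ν : Measure E) [IsFiniteMeasure ν]
    (hcarr : ν {y | ¬ (χ y = 1 ∧ 0 < ξ y)} = 0)
    (lamn : Measure ℝ)
    (hlamn : lamn = (volume.restrict (Set.Ioi (0:ℝ))).withDensity
      (fun t => ENNReal.ofReal (t ^ n)))
    (νξ : Measure E)
    (hνξ : νξ = Measure.map (fun y => (ξ y)⁻¹ • y)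
      (ν.withDensity (fun y => ENNReal.ofReal ((ξ y ^ (n + 1))⁻¹)))) :
    Measure.map (fun p : ℝ × E => p.1 • p.2) (lamn.prod ν) =
      Measure.map (fun p : ℝ × E => p.1 • p.2) (lamn.prod νξ) := by
  have hpos : ∀ᵐ y ∂ν, 0 < ξ y := by
    have h : ∀ᵐ y ∂ν, χ y = 1 ∧ 0 < ξ y := hcarr
    exact h.mono fun y hy => hy.2
  have hscale : Measurable fun y : E => (ξ y)⁻¹ • y := by fun_prop
  have hdens : Measurable fun y : E => ENNReal.ofReal ((ξ y ^ (n + 1))⁻¹) := by fun_prop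
  have hsmul : Measurable fun p : ℝ × E => p.1 • p.2 := by fun_prop
  subst hlamn hνξ
  refine Measure.ext_of_lintegral _ fun f hf => ?_
  have hfs : Measurable fun p : ℝ × E => f (p.1 • p.2) := hf.comp hsmul
  rw [lintegral_map hf hsmul, lintegral_map hf hsmul,
    lintegral_prod_symm _ hfs.aemeasurable, lintegral_prod_symm _ hfs.aemeasurable,
    lintegral_map hfs.lintegral_prod_left' hscale]
  refine Eq.trans ?_ (lintegral_withDensity_eq_lintegral_mul _ hdens
    (hfs.lintegral_prod_left'.comp hscale)).symm
  refine lintegral_congr_ae (hpos.mono fun y hy => ?_)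
  have key := lintegral_pow_withDensity_comp_inv_mul n hy
    (g := fun t => f (t • y)) (by fun_prop)
  simp only [Pi.mul_apply, Function.comp_apply, smul_smul]
  simp only [mul_comm (ξ y)⁻¹] at key
  rw [key, ← mul_assoc, ← ENNReal.ofReal_mul (by positivity),
    inv_mul_cancel₀ (by positivity), ENNReal.ofReal_one, one_mul]
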